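/- arXiv:2411.17572 — 2 statements merged into one kernel-verified Lean document; each statement's English description precedes it below -/
import Mathlib

section
/- Let k be an algebraically closed field, R = k[x_1,…,x_n] a positively ℕ^p-graded polynomial ring, and φ: R → S the standardization homomorphism into the standard ℕ^p-graded polynomial ring S = k[y_{i,j}]. For any homogeneous ideal I ⊆ R, the codimension (height) of I in R equals the codimension (height) of its standardization J = φ(I)S in S. -/
open MvPolynomial

/-- The standardization homomorphism `φ : k[x₁,…,x_n] → k[y_{i,j}]`, `xᵢ ↦ yᵢ,₁⋯yᵢ,ℓᵢ`. -/
noncomputable def standardization {n : ℕ} (k : Type*) [CommSemiring k] (ℓ : Fin n → ℕ) :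
    MvPolynomial (Fin n) k →ₐ[k] MvPolynomial (Σ i : Fin n, Fin (ℓ i)) k :=
  MvPolynomial.aeval fun i => ∏ j : Fin (ℓ i), MvPolynomial.X ⟨i, j⟩

/-- The codimension (height) of an ideal: the infimum of the heights of the primes
containing it. -/
noncomputable def idealCodim {R : Type*} [CommRing R] (I : Ideal R) : ℕ∞ :=
  ⨅ (P : PrimeSpectrum R) (_ : I ≤ P.asIdeal), Order.height P

/-!
The standardization homomorphism makes `S` a free `R`-module: dividing a monomial of `S` by the
largest possible monomial in the products `φ(xᵢ) = yᵢ,₁⋯yᵢ,ℓᵢ` leaves a monomial which, for every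
`i`, omits some `yᵢ,ⱼ`, and these remainders form a basis. As each `ℓᵢ` is positive, `1` is one of
them, so `φ` is faithfully flat. Height is preserved by extension of ideals along a faithfully flat
map of Noetherian rings: going-down gives `ht I ≤ ht IS`, and a minimal prime `P` of `I` lifts to a
minimal prime `Q` of `IS`. As `Q` has height zero in the fibre over `P`, its height is at most
`ht P`.
-/

section Height

variable {R S : Type*} [CommRing R] [CommRing S]

theorem idealCodim_eq_height (I : Ideal R) : idealCodim I = I.height := by
  simp only [idealCodim, ← PrimeSpectrum.height_eq_orderHeight]
  refine le_antisymm ?_ (le_iInf₂ fun P hP => Ideal.height_mono hP)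
  rw [Ideal.height_eq_inf_minimalPrimes]
  exact le_iInf₂ fun P hP => iInf₂_le (⟨P, hP.isPrime⟩ : PrimeSpectrum R) hP.le

theorem height_map_mk_eq_zero_of_mem_minimalPrimes {I P : Ideal R} (hP : P ∈ I.minimalPrimes) :
    (P.map (Ideal.Quotient.mk I)).height = 0 := by
  rw [Ideal.minimalPrimes_eq_comap] at hP
  obtain ⟨q, hq, rfl⟩ := hP
  have := hq.isPrime
  rwa [Ideal.map_comap_of_surjective _ Ideal.Quotient.mk_surjective, Ideal.height_eq_zero_iff]

variable [Algebra R S]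

theorem height_le_of_mem_minimalPrimes_map [IsNoetherianRing R] [IsNoetherianRing S]
    {p : Ideal R} [p.IsPrime] {P : Ideal S} [P.LiesOver p]
    (hP : P ∈ (p.map (algebraMap R S)).minimalPrimes) : P.height ≤ p.height := by
  have := hP.isPrime
  simpa only [height_map_mk_eq_zero_of_mem_minimalPrimes hP, add_zero] using
    Ideal.height_le_height_add_of_liesOver p P

theorem height_le_height_of_liesOver [Algebra.HasGoingDown R S]
    (p : Ideal R) [p.IsPrime] (P : Ideal S) [P.IsPrime] [P.LiesOver p] : p.height ≤ P.height := by
  rw [PrimeSpectrum.height_eq_orderHeight ⟨p, ‹_›⟩, PrimeSpectrum.height_eq_orderHeight ⟨P, ‹_›⟩]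
  refine Order.height_le fun l hl => ?_
  have : P.LiesOver l.last.asIdeal := by rwa [hl]
  obtain ⟨L, hLlength, hLlast, -⟩ := Ideal.exists_ltSeries_of_hasGoingDown l P
  exact hLlength ▸ Order.length_le_height hLlast.le

theorem height_le_height_map [Algebra.HasGoingDown R S] (I : Ideal R) :
    I.height ≤ (I.map (algebraMap R S)).height := by
  rw [Ideal.height_eq_inf_minimalPrimes (I.map _)]
  refine le_iInf₂ fun P hP => ?_
  have := hP.isPrime
  calc I.height
    _ ≤ (P.under R).height := Ideal.height_mono (Ideal.map_le_iff_le_comap.1 hP.le)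
    _ ≤ P.height := height_le_height_of_liesOver _ P

theorem height_map_of_faithfullyFlat [IsNoetherianRing R] [IsNoetherianRing S]
    [Module.FaithfullyFlat R S] (I : Ideal R) : (I.map (algebraMap R S)).height = I.height := by
  refine le_antisymm ?_ (height_le_height_map I)
  rw [Ideal.height_eq_inf_minimalPrimes I]
  refine le_iInf₂ fun p hp => ?_
  have := hp.isPrime
  obtain ⟨P, hP, hPp⟩ : ∃ P ∈ (I.map (algebraMap R S)).minimalPrimes,
      P.comap (algebraMap R S) = p :=
    Ideal.exists_minimalPrimes_comap_eq _ p (by rwa [Ideal.comap_map_eq_self_of_faithfullyFlat])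
  have : P.LiesOver p := ⟨hPp.symm⟩
  have hPmin : P ∈ (p.map (algebraMap R S)).minimalPrimes :=
    ⟨⟨hP.isPrime, Ideal.map_le_iff_le_comap.2 hPp.ge⟩,
      fun Q hQ => hP.2 ⟨hQ.1, (Ideal.map_mono hp.le).trans hQ.2⟩⟩
  exact (Ideal.height_mono hP.le).trans (height_le_of_mem_minimalPrimes_map hPmin)

end Height

section Freeness

variable {k A M ι κ : Type*} [CommSemiring k] [Semiring A] [Algebra k A] [AddCommMonoid M]
  [Module k M] [Module A M] [IsScalarTower k A M]

theorem linearCombination_bijective_of_basis_smul (a : Module.Basis ι k A) (m : κ → M)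
    (b : Module.Basis (κ × ι) k M) (hb : ∀ j i, b (j, i) = a i • m j) :
    Function.Bijective (Finsupp.linearCombination A m) := by
  let aκ := (Finsupp.basis fun _ : κ => a).reindex (Equiv.sigmaEquivProd κ ι)
  let e : (κ →₀ A) ≃ₗ[k] M := aκ.equiv b (Equiv.refl _)
  have he : (Finsupp.linearCombination A m).restrictScalars k = e := by
    refine aκ.ext fun ⟨j, i⟩ => ?_
    calc Finsupp.linearCombination A m (aκ (j, i))
      _ = a i • m j := by simp [aκ]
      _ = b (j, i) := (hb j i).symm
      _ = e (aκ (j, i)) := (aκ.equiv_apply (j, i) b (Equiv.refl _)).symm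
  have hcoe : ⇑(Finsupp.linearCombination A m) = e := congrArg DFunLike.coe he
  exact hcoe ▸ e.bijective

end Freeness

section Exponents

variable {ι : Type*} {κ : ι → Type*} [Finite ι]

/-- The vector of blockwise minima of an exponent vector `m`: the exponent of the largest monomial
in the `xᵢ` whose standardization divides the monomial with exponent `m`. On an empty block the
infimum has the junk value `0`. -/
noncomputable def blockMin (m : (Σ i, κ i) →₀ ℕ) : ι →₀ ℕ :=
  Finsupp.equivFunOnFinite.symm fun i => ⨅ j, m ⟨i, j⟩

theorem blockMin_apply (m : (Σ i, κ i) →₀ ℕ) (i : ι) : blockMin m i = ⨅ j, m ⟨i, j⟩ := rfl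

variable [∀ i, Finite (κ i)]

/-- The exponent vector that is constant on each block, with value `a i` on the `i`-th one: the
exponent of the standardization of the monomial with exponent `a`. -/
noncomputable def blockConst (a : ι →₀ ℕ) : (Σ i, κ i) →₀ ℕ :=
  Finsupp.equivFunOnFinite.symm fun s => a s.1

theorem blockConst_apply (a : ι →₀ ℕ) (s : Σ i, κ i) : blockConst a s = a s.1 := rfl

theorem blockConst_blockMin_le (m : (Σ i, κ i) →₀ ℕ) : blockConst (blockMin m) ≤ m :=
  fun ⟨i, j⟩ => ciInf_le' (fun j => m ⟨i, j⟩) j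

/-- The exponents that vanish somewhere on each block, that is, the exponents of the monomials
divisible by no `φ(xᵢ)`. -/
abbrev ReducedExponent (κ : ι → Type*) : Type _ :=
  {m : (Σ i, κ i) →₀ ℕ // ∀ i, ∃ j, m ⟨i, j⟩ = 0}

theorem blockMin_add_blockConst (r : ReducedExponent κ) (a : ι →₀ ℕ) :
    blockMin (r.1 + blockConst a) = a := by
  ext i
  obtain ⟨j, hj⟩ := r.2 i
  have : Nonempty (κ i) := ⟨j⟩
  refine le_antisymm ((ciInf_le' _ j).trans_eq ?_) (le_ciInf fun j' => ?_)
  · simp [blockConst_apply, hj]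
  · simp [blockConst_apply]

variable [∀ i, Nonempty (κ i)]

theorem exists_tsub_blockConst_blockMin_eq_zero (m : (Σ i, κ i) →₀ ℕ) (i : ι) :
    ∃ j, (m - blockConst (blockMin m) : (Σ i, κ i) →₀ ℕ) ⟨i, j⟩ = 0 := by
  obtain ⟨j, hj⟩ := ciInf_mem fun j => m ⟨i, j⟩
  refine ⟨j, ?_⟩
  rw [Finsupp.tsub_apply, blockConst_apply, blockMin_apply, ← hj, tsub_self]

/-- Division of a monomial by the largest standardized monomial dividing it, as a bijection of
exponent vectors. -/
noncomputable def reducedExponentProdEquiv :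
    ReducedExponent κ × (ι →₀ ℕ) ≃ ((Σ i, κ i) →₀ ℕ) where
  toFun p := p.1.1 + blockConst p.2
  invFun m := (⟨m - blockConst (blockMin m), exists_tsub_blockConst_blockMin_eq_zero m⟩, blockMin m)
  left_inv p := by
    ext1
    · ext1
      simp only [blockMin_add_blockConst, add_tsub_cancel_right]
    · exact blockMin_add_blockConst p.1 p.2
  right_inv m := tsub_add_cancel_of_le (blockConst_blockMin_le m)

end Exponents

section Standardization

variable {n : ℕ} (k : Type*) {ℓ : Fin n → ℕ}

theorem standardization_monomial [CommSemiring k] (a : Fin n →₀ ℕ) :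
    standardization k ℓ (monomial a 1) = monomial (blockConst a) 1 := by
  rw [standardization, aeval_monomial, map_one, one_mul, Finsupp.prod_fintype _ _ (by simp),
    monomial_eq, C_1, one_mul, Finsupp.prod_fintype _ _ (by simp), Fintype.prod_sigma]
  simp only [Finset.prod_pow, blockConst_apply]

theorem standardization_faithfullyFlat [CommRing k] (hℓ : ∀ i, ℓ i ≠ 0) :
    (standardization k ℓ).toRingHom.FaithfullyFlat := by
  have (i : Fin n) : Nonempty (Fin (ℓ i)) := Fin.pos_iff_nonempty.1 (Nat.pos_of_ne_zero (hℓ i))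
  algebraize [(standardization k ℓ).toRingHom]
  have : IsScalarTower k (MvPolynomial (Fin n) k) (MvPolynomial (Σ i, Fin (ℓ i)) k) :=
    .of_algebraMap_eq' (standardization k ℓ).comp_algebraMap.symm
  let m (r : ReducedExponent fun i => Fin (ℓ i)) : MvPolynomial (Σ i, Fin (ℓ i)) k := monomial r.1 1
  have hm : Function.Bijective (Finsupp.linearCombination (MvPolynomial (Fin n) k) m) := by
    refine linearCombination_bijective_of_basis_smul (basisMonomials (Fin n) k) m
      ((basisMonomials _ k).reindex reducedExponentProdEquiv.symm) fun r a => ?_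
    have hsmul : monomial a (1 : k) • m r = standardization k ℓ (monomial a 1) * m r := rfl
    simp [hsmul, standardization_monomial, m, reducedExponentProdEquiv, monomial_mul, add_comm]
  have : Nonempty (ReducedExponent fun i => Fin (ℓ i)) :=
    ⟨0, fun _ => ⟨Classical.arbitrary _, rfl⟩⟩
  exact .of_linearEquiv _ _ (LinearEquiv.ofBijective _ hm).symm

end Standardization

theorem standardization_codim_general {n : ℕ} (k : Type*) [CommRing k] [IsNoetherianRing k]
    {ℓ : Fin n → ℕ} (hℓ : ∀ i, ℓ i ≠ 0) (I : Ideal (MvPolynomial (Fin n) k)) :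
    idealCodim I = idealCodim (Ideal.map (standardization k ℓ) I) := by
  have hflat := standardization_faithfullyFlat k hℓ
  algebraize [(standardization k ℓ).toRingHom]
  rw [idealCodim_eq_height, idealCodim_eq_height]
  exact (height_map_of_faithfullyFlat I).symm

/-- Let `R = k[x₁,…,x_n]` be positively `ℕ^p`-graded (`deg xᵢ = D i ≠ 0`) over an algebraically
closed field `k`, and let `S = k[y_{i,j} : 1 ≤ j ≤ ℓᵢ]` (with `ℓᵢ = |D i|`) be standard
`ℕ^p`-graded, each `y_{i,j}` having degree a standard basis vector, so that
`deg xᵢ = Σⱼ deg y_{i,j}`. For any homogeneous ideal `I ⊆ R`, the codimension of `I` in `R`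
equals the codimension of its standardization `J = φ(I)S` in `S`. -/
theorem standardization_codim {p n : ℕ} (k : Type*) [Field k] [IsAlgClosed k]
    (D : Fin n → Fin p → ℕ) (hD : ∀ i, D i ≠ 0)
    (ℓ : Fin n → ℕ) (hℓ : ∀ i, ℓ i = ∑ c, D i c)
    (degY : (Σ i : Fin n, Fin (ℓ i)) → Fin p)
    (hdegY : ∀ (i : Fin n) (c : Fin p),
      (Finset.univ.filter fun j : Fin (ℓ i) => degY ⟨i, j⟩ = c).card = D i c)
    (I : Ideal (MvPolynomial (Fin n) k))
    (hI : ∀ f ∈ I, ∀ e : Fin p → ℕ, MvPolynomial.weightedHomogeneousComponent D e f ∈ I) :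
    idealCodim I = idealCodim (Ideal.map (standardization k ℓ) I) :=
  standardization_codim_general k
    (fun i h => hD i <| funext fun c => Finset.sum_eq_zero_iff.1 (hℓ i ▸ h) c (Finset.mem_univ c)) I
end

section
/- Let A be a commutative Noetherian ring whose spectrum Spec(A) is connected, S = A[x_1,…,x_n] graded with deg(x_i) = δ_i > 0, I ⊆ S a homogeneous ideal, and R = S/I. If R is flat as an A-module, then all fibers R(p) = R ⊗_A κ(p), for p ∈ Spec(A), have the same Krull dimension. -/
open TensorProduct

/-- The residue field `κ(p) = A_p / p A_p` of `A` at a prime `p`. -/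
abbrev residueFieldAt {A : Type*} [CommRing A] (p : PrimeSpectrum A) : Type _ :=
  IsLocalRing.ResidueField (Localization.AtPrime p.asIdeal)

/-!
Truncating polynomials by weighted degree maps the homogeneous ideal `I` into itself, so it splits
off from `R = S ⧸ I` the part `R_{≤ m}` of degree at most `m`. This part is therefore flat and
finitely presented over `A`, and the dimension of its fibre over `p` is locally constant in `p`.
Hence all fibres of `R` have the same Hilbert function `m ↦ dim R(p)_{≤ m}`. By Noether
normalization this function grows like `m ^ dim R(p)`, so it determines the Krull dimension.
-/

open Module MvPolynomial

section KrullDimension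

lemma ringKrullDim_eq_of_isIntegral_of_injective {R S : Type*} [CommRing R] [CommRing S]
    {f : R →+* S} (hint : f.IsIntegral) (hinj : Function.Injective f) :
    ringKrullDim S = ringKrullDim R := by
  algebraize [f]
  have : Algebra.IsIntegral R S := ⟨hint⟩
  apply le_antisymm
  · exact Order.krullDim_le_of_strictMono (PrimeSpectrum.comap (algebraMap R S))
      fun _ _ hPQ ↦ Ideal.IsIntegral.comap_lt_comap (R := R) hPQ
  · refine iSup_le fun chain ↦ ?_
    obtain ⟨Q, hQ⟩ := hint.comap_surjective hinj chain.head
    have : Q.asIdeal.LiesOver chain.head.asIdeal := ⟨congrArg PrimeSpectrum.asIdeal hQ.symm⟩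
    obtain ⟨lift, hlength, -⟩ := Ideal.exists_ltSeries_of_hasGoingUp chain Q.asIdeal
    exact hlength ▸ Order.LTSeries.length_le_krullDim lift

end KrullDimension

section PolynomialGrowth

/-- `HasPolynomialGrowth f d` says that `f` grows like the polynomial `m ^ d`, up to constant
factors. The bounds use `m + 1` so that they can be required for every `m`, including `m = 0`. -/
def HasPolynomialGrowth (f : ℕ → ℕ) (d : ℕ) : Prop :=
  (∃ C, ∀ m, (m + 1) ^ d ≤ C * f m) ∧ ∃ C, ∀ m, f m ≤ C * (m + 1) ^ d

lemma le_of_forall_succ_pow_le {d d' C : ℕ} (h : ∀ m, (m + 1) ^ d ≤ C * (m + 1) ^ d') :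
    d ≤ d' := by
  by_contra! hlt
  have hpow : (C + 1) ^ d' * (C + 1) ≤ (C + 1) ^ d' * C :=
    calc (C + 1) ^ d' * (C + 1) = (C + 1) ^ (d' + 1) := (pow_succ _ _).symm
      _ ≤ (C + 1) ^ d := Nat.pow_le_pow_right C.succ_pos hlt
      _ ≤ (C + 1) ^ d' * C := (h C).trans_eq (mul_comm _ _)
  exact C.not_succ_le_self (Nat.le_of_mul_le_mul_left hpow (by positivity))

namespace HasPolynomialGrowth

variable {f : ℕ → ℕ} {d d' : ℕ}

lemma exponent_le (h : HasPolynomialGrowth f d) (h' : HasPolynomialGrowth f d') : d ≤ d' := by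
  obtain ⟨⟨C, hC⟩, -⟩ := h
  obtain ⟨-, C', hC'⟩ := h'
  refine le_of_forall_succ_pow_le (C := C * C') fun m ↦ (hC m).trans ?_
  rw [mul_assoc]
  exact Nat.mul_le_mul_left C (hC' m)

lemma exponent_unique (h : HasPolynomialGrowth f d) (h' : HasPolynomialGrowth f d') : d = d' :=
  (h.exponent_le h').antisymm (h'.exponent_le h)

end HasPolynomialGrowth

end PolynomialGrowth

section Filtration

lemma exists_le_of_fg_of_monotone {R M : Type*} [Semiring R] [AddCommMonoid M] [Module R M]
    {F : ℕ → Submodule R M} (hmono : Monotone F) (hexh : ∀ x, ∃ m, x ∈ F m)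
    {N : Submodule R M} (hN : N.FG) : ∃ m, N ≤ F m := by
  induction N, hN using Submodule.fg_induction with
  | singleton x =>
    obtain ⟨m, hm⟩ := hexh x
    exact ⟨m, (Submodule.span_singleton_le_iff_mem x _).2 hm⟩
  | sup N₁ N₂ _ _ h₁ h₂ =>
    obtain ⟨m₁, hm₁⟩ := h₁
    obtain ⟨m₂, hm₂⟩ := h₂
    exact ⟨max m₁ m₂, sup_le (hm₁.trans (hmono (le_max_left _ _)))
      (hm₂.trans (hmono (le_max_right _ _)))⟩

variable {R S : Type*} [CommSemiring R] [CommSemiring S] [Algebra R S]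

lemma pow_le_of_mul_le {F : ℕ → Submodule R S} (hone : 1 ≤ F 0)
    (hmul : ∀ a b, F a * F b ≤ F (a + b)) (c m : ℕ) : F c ^ m ≤ F (c * m) := by
  induction m with
  | zero => simpa using hone
  | succ m ih =>
    rw [pow_succ, mul_add_one]
    exact (mul_le_mul_left ih _).trans (hmul _ _)

lemma finiteType_of_forall_exists_mem_pow {V : Submodule R S} (hV : V.FG)
    (h : ∀ x, ∃ m, x ∈ V ^ m) : Algebra.FiniteType R S := by
  obtain ⟨s, rfl⟩ := hV
  refine ⟨s, eq_top_iff.2 fun x _ ↦ ?_⟩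
  obtain ⟨m, hx⟩ := h x
  let T := Algebra.adjoin R (s : Set S)
  have hpow : T.toSubmodule ^ m ≤ T.toSubmodule :=
    pow_le_of_mul_le (F := fun _ ↦ T.toSubmodule) (Submodule.one_le.2 (one_mem T))
      (fun _ _ ↦ T.isIdempotentElem_toSubmodule.le) 0 m
  exact hpow (pow_le_pow_left' (Submodule.span_le.2 Algebra.subset_adjoin) m hx)

-- Absorbing `V * M` into `W ^ c * M` costs a fixed power of `W` for each factor `V`.
lemma exists_pow_le_pow_mul {V W M : Submodule R S} (hV : V.FG) (hM : M.FG)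
    (hWone : 1 ≤ W) (hMone : 1 ≤ M) (hexh : ∀ b, ∃ k, b ∈ W ^ k * M) :
    ∃ c, ∀ m, V ^ m ≤ W ^ (c * m) * M := by
  have hmono : Monotone fun k ↦ W ^ k * M := fun _ _ hkl ↦
    mul_le_mul_left (pow_le_pow_right' hWone hkl) M
  obtain ⟨c, hc⟩ := exists_le_of_fg_of_monotone hmono hexh (hV.mul hM)
  have hpow_mul (m : ℕ) : V ^ m * M ≤ W ^ (c * m) * M := by
    induction m with
    | zero => simp
    | succ m ih =>
      calc V ^ (m + 1) * M = V ^ m * (V * M) := by rw [pow_succ, mul_assoc]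
        _ ≤ V ^ m * (W ^ c * M) := mul_le_mul_right hc _
        _ = W ^ c * (V ^ m * M) := mul_left_comm _ _ _
        _ ≤ W ^ c * (W ^ (c * m) * M) := mul_le_mul_right ih _
        _ = W ^ (c * (m + 1)) * M := by rw [← mul_assoc, ← pow_add, mul_add_one, add_comm]
  exact ⟨c, fun m ↦ (le_mul_of_one_le_right' hMone).trans (hpow_mul m)⟩

variable {K B : Type*} [Field K] [CommRing B] [Algebra K B]

lemma finrank_submodule_mul_le (M N : Submodule K B) [Module.Finite K M] [Module.Finite K N] :
    finrank K ↥(M * N) ≤ finrank K M * finrank K N := by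
  rw [← Submodule.mulMap_range, ← finrank_tensorProduct]
  exact LinearMap.finrank_range_le _

lemma exists_succ_pow_le_mul_finrank {F : ℕ → Submodule K B} [∀ m, Module.Finite K (F m)]
    (hmono : Monotone F) (hone : 1 ≤ F 0) (hmul : ∀ a b, F a * F b ≤ F (a + b))
    (hexh : ∀ b, ∃ m, b ∈ F m) {W : Submodule K B} (hW : W.FG) {d : ℕ}
    (hWd : ∀ m, finrank K ↥(W ^ m) = (m + 1) ^ d) :
    ∃ C, ∀ m, (m + 1) ^ d ≤ C * finrank K (F m) := by
  obtain ⟨c, hc⟩ := exists_le_of_fg_of_monotone hmono hexh hW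
  refine ⟨(c + 1) ^ d, fun m ↦ ?_⟩
  have hle : W ^ (m / (c + 1)) ≤ F m :=
    calc W ^ (m / (c + 1)) ≤ F (c + 1) ^ (m / (c + 1)) :=
          pow_le_pow_left' (hc.trans (hmono c.le_succ)) _
      _ ≤ F ((c + 1) * (m / (c + 1))) := pow_le_of_mul_le hone hmul _ _
      _ ≤ F m := hmono (Nat.mul_div_le _ _)
  calc (m + 1) ^ d ≤ ((c + 1) * (m / (c + 1) + 1)) ^ d :=
        Nat.pow_le_pow_left (Nat.lt_mul_div_succ m c.succ_pos) _
    _ = (c + 1) ^ d * finrank K ↥(W ^ (m / (c + 1))) := by rw [mul_pow, hWd]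
    _ ≤ (c + 1) ^ d * finrank K (F m) := Nat.mul_le_mul_left _ (Submodule.finrank_mono hle)

lemma exists_finrank_pow_le_mul_succ_pow {V W M : Submodule K B} (hV : V.FG) (hW : W.FG)
    (hM : M.FG) (hWone : 1 ≤ W) (hMone : 1 ≤ M) (hexh : ∀ b, ∃ k, b ∈ W ^ k * M) {d : ℕ}
    (hWd : ∀ m, finrank K ↥(W ^ m) = (m + 1) ^ d) :
    ∃ C, ∀ m, finrank K ↥(V ^ m) ≤ C * (m + 1) ^ d := by
  obtain ⟨c, hc⟩ := exists_pow_le_pow_mul hV hM hWone hMone hexh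
  have hMfin : Module.Finite K M := .of_fg hM
  refine ⟨finrank K M * (c + 1) ^ d, fun m ↦ ?_⟩
  have hWfin : Module.Finite K ↥(W ^ (c * m)) := .of_fg (hW.pow _)
  have hWMfin : Module.Finite K ↥(W ^ (c * m) * M) := .of_fg ((hW.pow _).mul hM)
  calc finrank K ↥(V ^ m) ≤ finrank K ↥(W ^ (c * m) * M) := Submodule.finrank_mono (hc m)
    _ ≤ finrank K ↥(W ^ (c * m)) * finrank K M := finrank_submodule_mul_le _ _
    _ = finrank K M * (c * m + 1) ^ d := by rw [hWd, mul_comm]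
    _ ≤ finrank K M * ((c + 1) * (m + 1)) ^ d :=
        Nat.mul_le_mul_left _ (Nat.pow_le_pow_left (by lia) _)
    _ = finrank K M * (c + 1) ^ d * (m + 1) ^ d := by rw [mul_pow, mul_assoc]

end Filtration

section RestrictDegree

variable {ι R : Type*} [CommSemiring R]

open scoped Pointwise in
lemma restrictDegree_mul_restrictDegree (a b : ℕ) :
    restrictDegree ι R a * restrictDegree ι R b = restrictDegree ι R (a + b) := by
  rw [restrictDegree, restrictDegree, restrictDegree, ← restrictSupport_add]
  congr 1
  ext s
  refine ⟨?_, fun hs ↦ ⟨s.mapRange (min a) (by simp), fun i ↦ by simp,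
    s.mapRange (· - a) (by simp), fun i ↦ ?_, ?_⟩⟩
  · rintro ⟨s, hs, t, ht, rfl⟩ i
    exact add_le_add (hs i) (ht i)
  · rw [Finsupp.mapRange_apply]
    exact Nat.sub_le_iff_le_add'.2 (hs i)
  · ext i
    simp only [Finsupp.add_apply, Finsupp.mapRange_apply]
    lia

open scoped Pointwise in
lemma restrictDegree_one_pow (m : ℕ) : restrictDegree ι R 1 ^ m = restrictDegree ι R m := by
  induction m with
  | zero =>
    rw [pow_zero, restrictDegree, ← restrictSupport_zero]
    congr 1
    ext s
    simp [Finsupp.ext_iff]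
  | succ m ih => rw [pow_succ, ih, restrictDegree_mul_restrictDegree]

lemma exists_mem_restrictDegree (p : MvPolynomial ι R) : ∃ m, p ∈ restrictDegree ι R m :=
  ⟨p.totalDegree, restrictTotalDegree_le_restrictDegree _ _ _
    ((mem_restrictTotalDegree _ _ _).2 le_rfl)⟩

lemma finrank_restrictDegree [StrongRankCondition R] [Finite ι] (m : ℕ) :
    finrank R (restrictDegree ι R m) = (m + 1) ^ Nat.card ι := by
  let boxEquiv : {s : ι →₀ ℕ | ∀ i, s i ≤ m} ≃ (ι → Set.Iic m) :=
    (Finsupp.equivFunOnFinite.subtypeEquiv (q := fun s ↦ ∀ i, s i ≤ m) fun _ ↦ Iff.rfl).trans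
      (Equiv.subtypePiEquivPi (p := fun _ k ↦ k ≤ m))
  rw [restrictDegree, finrank_eq_nat_card_basis (basisRestrictSupport R _),
    Nat.card_congr boxEquiv, Nat.card_fun]
  simp

variable {S : Type*} [CommSemiring S] [Algebra R S] (g : MvPolynomial ι R →ₐ[R] S)

lemma map_restrictDegree_one_pow (m : ℕ) :
    (restrictDegree ι R 1).map g.toLinearMap ^ m = (restrictDegree ι R m).map g.toLinearMap := by
  rw [← Submodule.map_pow, restrictDegree_one_pow]

lemma one_le_map_restrictDegree (m : ℕ) : 1 ≤ (restrictDegree ι R m).map g.toLinearMap :=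
  Submodule.one_le.2 ⟨1, monomial_mem_restrictSupport R |>.2 (.inl (by simp)), map_one g⟩

variable {g} in
lemma finrank_map_restrictDegree_one_pow [StrongRankCondition R] [Finite ι]
    (hg : Function.Injective g) (m : ℕ) :
    finrank R ↥((restrictDegree ι R 1).map g.toLinearMap ^ m) = (m + 1) ^ Nat.card ι := by
  rw [map_restrictDegree_one_pow, ← finrank_restrictDegree (R := R)]
  exact (Submodule.equivMapOfInjective g.toLinearMap hg _).finrank_eq.symm

lemma exists_fg_forall_mem_map_restrictDegree_one_pow_mul {R S : Type*} [CommRing R] [CommRing S]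
    [Algebra R S] {g : MvPolynomial ι R →ₐ[R] S} (hg : g.Finite) :
    ∃ M : Submodule R S, M.FG ∧ 1 ≤ M ∧
      ∀ b, ∃ k, b ∈ (restrictDegree ι R 1).map g.toLinearMap ^ k * M := by
  algebraize [g.toRingHom]
  have : Module.Finite (MvPolynomial ι R) S := hg
  obtain ⟨s, hs⟩ := Module.Finite.fg_top (R := MvPolynomial ι R) (M := S)
  classical
  let M := Submodule.span R ((insert 1 s : Finset S) : Set S)
  have hspan (b : S) (hb : b ∈ Submodule.span (MvPolynomial ι R) (s : Set S)) :
      ∃ k, b ∈ (restrictDegree ι R 1).map g.toLinearMap ^ k * M := by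
    induction hb using Submodule.span_induction with
    | mem b hb => exact ⟨0, by simpa using Submodule.subset_span (by simp [hb])⟩
    | zero => exact ⟨0, zero_mem _⟩
    | add b c _ _ ihb ihc =>
      obtain ⟨k, hk⟩ := ihb
      obtain ⟨l, hl⟩ := ihc
      have hmono {i j : ℕ} (hij : i ≤ j) := mul_le_mul_left
        (pow_le_pow_right' (one_le_map_restrictDegree g 1) hij) M
      exact ⟨max k l, add_mem (hmono (le_max_left k l) hk) (hmono (le_max_right k l) hl)⟩
    | smul p b _ ih =>
      obtain ⟨k, hk⟩ := ih
      obtain ⟨l, hl⟩ := exists_mem_restrictDegree p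
      refine ⟨l + k, ?_⟩
      rw [pow_add, mul_assoc, map_restrictDegree_one_pow g l, Algebra.smul_def]
      exact Submodule.mul_mem_mul ⟨p, hl, rfl⟩ hk
  refine ⟨M, ⟨_, rfl⟩, Submodule.one_le.2 (Submodule.subset_span (by simp)), fun b ↦ ?_⟩
  exact hspan b (hs ▸ Submodule.mem_top)

end RestrictDegree

section NoetherNormalization

variable {K B : Type*} [Field K] [CommRing B] [Algebra K B]

lemma ringKrullDim_eq_natCard_of_finite_of_injective {ι : Type*} [Finite ι]
    {g : MvPolynomial ι K →ₐ[K] B} (hg : Function.Injective g) (hfin : g.Finite) :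
    ringKrullDim B = Nat.card ι := by
  rw [ringKrullDim_eq_of_isIntegral_of_injective (f := g.toRingHom) hfin.to_isIntegral hg,
    ringKrullDim_of_isNoetherianRing, ringKrullDim_eq_zero_of_field, zero_add]

theorem exists_ringKrullDim_eq_and_hasPolynomialGrowth [Nontrivial B] {F : ℕ → Submodule K B}
    [∀ m, Module.Finite K (F m)] (hmono : Monotone F) (hone : 1 ≤ F 0)
    (hmul : ∀ a b, F a * F b ≤ F (a + b)) (hexh : ∀ b, ∃ m, b ∈ F m)
    {V : Submodule K B} (hV : V.FG) (hFV : ∀ m, F m ≤ V ^ m) :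
    ∃ d : ℕ, ringKrullDim B = d ∧ HasPolynomialGrowth (fun m ↦ finrank K (F m)) d := by
  have : Algebra.FiniteType K B :=
    finiteType_of_forall_exists_mem_pow hV fun b ↦ (hexh b).imp fun m hm ↦ hFV m hm
  obtain ⟨d, g, hinj, hfin⟩ := exists_finite_inj_algHom_of_fg K B
  have hW : ((restrictDegree (Fin d) K 1).map g.toLinearMap).FG := .map _ .of_finite
  obtain ⟨M, hM, hMone, hM_exh⟩ := exists_fg_forall_mem_map_restrictDegree_one_pow_mul hfin
  obtain ⟨C, hC⟩ := exists_finrank_pow_le_mul_succ_pow hV hW hM (one_le_map_restrictDegree g 1)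
    hMone hM_exh (finrank_map_restrictDegree_one_pow hinj)
  rw [Nat.card_fin] at hC
  refine ⟨d, by rw [ringKrullDim_eq_natCard_of_finite_of_injective hinj hfin, Nat.card_fin],
    exists_succ_pow_le_mul_finrank hmono hone hmul hexh hW ?_, C, fun m ↦ ?_⟩
  · simpa using finrank_map_restrictDegree_one_pow hinj
  · have : Module.Finite K ↥(V ^ m) := .of_fg (hV.pow m)
    exact (Submodule.finrank_mono (hFV m)).trans (hC m)

end NoetherNormalization

section WeightFiltration

variable {σ A R : Type*} [CommRing A] [CommRing R] [Algebra A R]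

/-- The image in `R` of the polynomials of weighted degree at most `m`, where `R` is presented by
`π : A[x_i] → R` and `x_i` has weight `w i`. If `π` is homogeneous, this is the sum of the graded
pieces of `R` of degree at most `m`. -/
noncomputable def weightFiltration (w : σ → ℕ) (π : MvPolynomial σ A →ₐ[A] R) (m : ℕ) :
    Submodule A R :=
  (restrictSupport A {s | Finsupp.weight w s ≤ m}).map π.toLinearMap

variable (w : σ → ℕ) (π : MvPolynomial σ A →ₐ[A] R)

lemma weightFiltration_eq_span (m : ℕ) : weightFiltration w π m =
    Submodule.span A ((fun s ↦ π (monomial s 1)) '' {s | Finsupp.weight w s ≤ m}) := by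
  rw [weightFiltration, restrictSupport_eq_span, Submodule.map_span, Set.image_image]
  rfl

lemma weightFiltration_mono : Monotone (weightFiltration w π) := fun _ _ hab ↦
  Submodule.map_mono (restrictSupport_mono A fun _ hs ↦ le_trans hs hab)

lemma one_le_weightFiltration (m : ℕ) : 1 ≤ weightFiltration w π m :=
  Submodule.one_le.2 ⟨1, (monomial_mem_restrictSupport A).2 (.inl (by simp)), map_one π⟩

open scoped Pointwise in
lemma weightFiltration_mul_le (a b : ℕ) :
    weightFiltration w π a * weightFiltration w π b ≤ weightFiltration w π (a + b) := by
  rw [weightFiltration, weightFiltration, ← Submodule.map_mul, ← restrictSupport_add]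
  refine Submodule.map_mono (restrictSupport_mono A (Set.add_subset_iff.2 fun s hs t ht ↦ ?_))
  exact (map_add (Finsupp.weight w) s t).trans_le (add_le_add hs ht)

variable {π} in
lemma exists_mem_weightFiltration (hπ : Function.Surjective π) (b : R) :
    ∃ m, b ∈ weightFiltration w π m := by
  obtain ⟨f, rfl⟩ := hπ b
  exact ⟨f.support.sup (Finsupp.weight w), f, fun _ hs ↦ Finset.le_sup (f := Finsupp.weight w) hs,
    rfl⟩

lemma monomial_mem_restrictTotalDegree_one_pow (s : σ →₀ ℕ) :
    (monomial s 1 : MvPolynomial σ A) ∈ restrictTotalDegree σ A 1 ^ s.degree := by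
  induction s using Finsupp.induction_linear with
  | zero => exact Submodule.one_le.1 (pow_zero (restrictTotalDegree σ A 1)).ge
  | add s t hs ht =>
    rw [map_add, pow_add, ← one_mul (1 : A), ← monomial_mul]
    exact Submodule.mul_mem_mul hs ht
  | single i k =>
    rw [← X_pow_eq_monomial, Finsupp.degree_single]
    refine Submodule.pow_mem_pow _ ?_ k
    exact (mem_restrictTotalDegree _ _ _).2 ((totalDegree_monomial_le _ _).trans (by simp))

variable {w}

lemma degree_le_weight (hw : ∀ i, w i ≠ 0) (s : σ →₀ ℕ) : s.degree ≤ Finsupp.weight w s := by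
  rw [Finsupp.weight_apply]
  exact Finset.sum_le_sum fun i _ ↦ Nat.le_mul_of_pos_right _ (Nat.pos_of_ne_zero (hw i))

lemma weightFiltration_le_pow (hw : ∀ i, w i ≠ 0) (m : ℕ) :
    weightFiltration w π m ≤ ((restrictTotalDegree σ A 1).map π.toLinearMap) ^ m := by
  rw [weightFiltration, ← Submodule.map_pow, restrictSupport_eq_span]
  refine Submodule.map_mono (Submodule.span_le.2 (Set.image_subset_iff.2 fun s hs ↦ ?_))
  have hone : 1 ≤ restrictTotalDegree σ A 1 :=
    Submodule.one_le.2 ((mem_restrictTotalDegree _ _ _).2 (by simp))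
  exact pow_le_pow_right' hone ((degree_le_weight hw s).trans hs)
    (monomial_mem_restrictTotalDegree_one_pow s)

variable [Finite σ]

lemma finite_restrictSupport_weight_le (hw : ∀ i, w i ≠ 0) (m : ℕ) :
    Module.Finite A (restrictSupport A {s : σ →₀ ℕ | Finsupp.weight w s ≤ m}) := by
  have := (Finsupp.finite_of_nat_weight_le w hw m).to_subtype
  exact .of_basis (basisRestrictSupport A _)

lemma finite_weightFiltration (hw : ∀ i, w i ≠ 0) (m : ℕ) :
    Module.Finite A (weightFiltration w π m) :=
  have := finite_restrictSupport_weight_le (A := A) hw m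
  inferInstanceAs (Module.Finite A (Submodule.map _ _))

variable {K B : Type*} [Field K] [CommRing B] [Algebra K B] {π : MvPolynomial σ K →ₐ[K] B}

theorem exists_ringKrullDim_eq_and_hasPolynomialGrowth_weightFiltration [Nontrivial B]
    (hw : ∀ i, w i ≠ 0) (hπ : Function.Surjective π) :
    ∃ d : ℕ, ringKrullDim B = d ∧
      HasPolynomialGrowth (fun m ↦ finrank K (weightFiltration w π m)) d :=
  have := finite_weightFiltration π hw
  exists_ringKrullDim_eq_and_hasPolynomialGrowth (weightFiltration_mono w π)
    (one_le_weightFiltration w π 0) (weightFiltration_mul_le w π)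
    (exists_mem_weightFiltration w hπ) (.map _ .of_finite) (weightFiltration_le_pow π hw)

lemma finrank_weightFiltration_zero_eq_zero_iff (hw : ∀ i, w i ≠ 0) :
    finrank K (weightFiltration w π 0) = 0 ↔ Subsingleton B := by
  have := finite_weightFiltration π hw 0
  rw [Submodule.finrank_eq_zero]
  refine ⟨fun hbot ↦ subsingleton_of_zero_eq_one ?_, fun _ ↦ Subsingleton.elim _ _⟩
  have hone := Submodule.one_le.1 (one_le_weightFiltration w π 0)
  rw [hbot, Submodule.mem_bot] at hone
  exact hone.symm

theorem ringKrullDim_eq_of_finrank_weightFiltration_eq {K' B' : Type*} [Field K'] [CommRing B']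
    [Algebra K' B'] {π' : MvPolynomial σ K' →ₐ[K'] B'} (hw : ∀ i, w i ≠ 0)
    (hπ : Function.Surjective π) (hπ' : Function.Surjective π')
    (h : ∀ m, finrank K (weightFiltration w π m) = finrank K' (weightFiltration w π' m)) :
    ringKrullDim B = ringKrullDim B' := by
  have hsub : Subsingleton B ↔ Subsingleton B' := by
    rw [← finrank_weightFiltration_zero_eq_zero_iff (π := π) hw, h,
      finrank_weightFiltration_zero_eq_zero_iff hw]
  rcases subsingleton_or_nontrivial B with hB | hB
  · have := hsub.1 hB
    rw [ringKrullDim_eq_bot_of_subsingleton, ringKrullDim_eq_bot_of_subsingleton]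
  · have : Nontrivial B' := not_subsingleton_iff_nontrivial.1 (mt hsub.2 (not_subsingleton B))
    obtain ⟨d, hd, hgrowth⟩ :=
      exists_ringKrullDim_eq_and_hasPolynomialGrowth_weightFiltration hw hπ
    obtain ⟨d', hd', hgrowth'⟩ :=
      exists_ringKrullDim_eq_and_hasPolynomialGrowth_weightFiltration hw hπ'
    rw [hd, hd', hgrowth.exponent_unique (funext h ▸ hgrowth')]

end WeightFiltration

section WeightTruncation

variable {σ A : Type*} [CommRing A] (w : σ → ℕ) (m : ℕ)

/-- The `A`-linear projection of `A[x_i]` onto the polynomials of weighted degree at most `m`, where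
`x_i` has weight `w i`, discarding all monomials of larger weight. -/
noncomputable def weightTruncation : MvPolynomial σ A →ₗ[A] MvPolynomial σ A :=
  ∑ k ∈ Finset.range (m + 1), weightedHomogeneousComponent w k

lemma coeff_weightTruncation (f : MvPolynomial σ A) (s : σ →₀ ℕ) :
    coeff s (weightTruncation w m f) = if Finsupp.weight w s ≤ m then coeff s f else 0 := by
  classical
  simp only [weightTruncation, LinearMap.sum_apply, coeff_sum, coeff_weightedHomogeneousComponent,
    Finset.sum_ite_eq, Finset.mem_range, Nat.lt_succ_iff]

lemma weightTruncation_mem (f : MvPolynomial σ A) :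
    weightTruncation w m f ∈ restrictSupport A {s | Finsupp.weight w s ≤ m} := fun s hs ↦ by
  by_contra hlt
  exact mem_support_iff.1 hs ((coeff_weightTruncation w m f s).trans (if_neg hlt))

variable {w m} in
lemma weightTruncation_of_mem {f : MvPolynomial σ A}
    (hf : f ∈ restrictSupport A {s | Finsupp.weight w s ≤ m}) : weightTruncation w m f = f := by
  ext s
  rw [coeff_weightTruncation, ite_eq_left_iff]
  exact fun hlt ↦ (notMem_support_iff.1 fun hs ↦ hlt (hf hs)).symm

lemma weightTruncation_weightTruncation_mul (f g : MvPolynomial σ A) :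
    weightTruncation w m (weightTruncation w m f * g) = weightTruncation w m (f * g) := by
  classical
  ext s
  simp only [coeff_weightTruncation, coeff_mul]
  refine if_ctx_congr Iff.rfl (fun hs ↦ Finset.sum_congr rfl fun ⟨a, b⟩ hab ↦ ?_) fun _ ↦ rfl
  rw [← Finset.HasAntidiagonal.mem_antidiagonal.1 hab, map_add] at hs
  rw [if_pos (le_of_add_le_left hs)]

variable {w} in
lemma weightTruncation_mem_of_homogeneous {I : Ideal (MvPolynomial σ A)}
    (hI : ∀ f ∈ I, ∀ k, weightedHomogeneousComponent w k f ∈ I) {f : MvPolynomial σ A}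
    (hf : f ∈ I) : weightTruncation w m f ∈ I := by
  rw [weightTruncation, LinearMap.sum_apply]
  exact I.sum_mem fun k _ ↦ hI f hf k

lemma restrictScalars_ideal_span {S : Type*} [CommRing S] [Algebra A S] (G : Set S) :
    (Ideal.span G).restrictScalars A = ⊤ * Submodule.span A G := by
  rw [← Submodule.span_univ, Submodule.span_mul_span]
  exact (Submodule.span_smul_of_span_eq_top Submodule.span_univ G).symm

lemma map_weightTruncation_ideal_span (G : Set (MvPolynomial σ A)) :
    ((Ideal.span G).restrictScalars A).map (weightTruncation w m) =
      (restrictSupport A {s | Finsupp.weight w s ≤ m} * Submodule.span A G).map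
        (weightTruncation w m) := by
  rw [restrictScalars_ideal_span]
  refine le_antisymm (Submodule.map_le_iff_le_comap.2 (Submodule.mul_le.2 fun f _ g hg ↦ ?_))
    (Submodule.map_mono (mul_le_mul_left le_top _))
  exact ⟨_, Submodule.mul_mem_mul (weightTruncation_mem w m f) hg,
    weightTruncation_weightTruncation_mul w m f g⟩

variable {w} [Finite σ]

lemma fg_map_weightTruncation (hw : ∀ i, w i ≠ 0) {I : Ideal (MvPolynomial σ A)} (hI : I.FG) :
    ((I.restrictScalars A).map (weightTruncation w m)).FG := by
  obtain ⟨G, rfl⟩ := hI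
  have := finite_restrictSupport_weight_le (A := A) hw m
  exact map_weightTruncation_ideal_span w m (G : Set (MvPolynomial σ A)) ▸
    ((Submodule.FG.of_finite).mul (Submodule.fg_span G.finite_toSet)).map _

end WeightTruncation

section GradedQuotient

variable {σ A R : Type*} [CommRing A] [CommRing R] [Algebra A R] {w : σ → ℕ}
  {π : MvPolynomial σ A →ₐ[A] R}

lemma exists_retraction_weightFiltration
    (hker : ∀ f ∈ RingHom.ker π, ∀ k, weightedHomogeneousComponent w k f ∈ RingHom.ker π)
    (hπ : Function.Surjective π) (m : ℕ) :
    ∃ r : R →ₗ[A] weightFiltration w π m, r ∘ₗ (weightFiltration w π m).subtype = .id := by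
  let toFiltration : MvPolynomial σ A →ₗ[A] weightFiltration w π m :=
    (π.toLinearMap ∘ₗ weightTruncation w m).codRestrict _
      fun f ↦ ⟨_, weightTruncation_mem w m f, rfl⟩
  have hle : π.toLinearMap.ker ≤ toFiltration.ker := fun f hf ↦
    LinearMap.mem_ker.2 (Subtype.ext (weightTruncation_mem_of_homogeneous m hker hf))
  refine ⟨π.toLinearMap.ker.liftQ toFiltration hle ∘ₗ
    (π.toLinearMap.quotKerEquivOfSurjective hπ).symm.toLinearMap, ?_⟩
  ext ⟨_, f, hf, rfl⟩
  have hsymm : (π.toLinearMap.quotKerEquivOfSurjective hπ).symm (π f) = Submodule.Quotient.mk f :=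
    (LinearEquiv.symm_apply_eq _).2 rfl
  change (π.toLinearMap.ker.liftQ toFiltration hle
    ((π.toLinearMap.quotKerEquivOfSurjective hπ).symm (π f)) : R) = π f
  rw [hsymm]
  exact congrArg π (weightTruncation_of_mem hf)

lemma ker_inf_restrictSupport_eq_map_weightTruncation
    (hker : ∀ f ∈ RingHom.ker π, ∀ k, weightedHomogeneousComponent w k f ∈ RingHom.ker π) (m : ℕ) :
    (RingHom.ker π).restrictScalars A ⊓ restrictSupport A {s | Finsupp.weight w s ≤ m} =
      ((RingHom.ker π).restrictScalars A).map (weightTruncation w m) := by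
  refine le_antisymm (fun f ⟨hf, hfm⟩ ↦ ⟨f, hf, weightTruncation_of_mem hfm⟩)
    (Submodule.map_le_iff_le_comap.2 fun f hf ↦ ⟨?_, weightTruncation_mem w m f⟩)
  exact weightTruncation_mem_of_homogeneous m hker hf

lemma finitePresentation_weightFiltration [Finite σ] (hw : ∀ i, w i ≠ 0)
    (hker : ∀ f ∈ RingHom.ker π, ∀ k, weightedHomogeneousComponent w k f ∈ RingHom.ker π)
    (hfg : (RingHom.ker π).FG) (m : ℕ) : Module.FinitePresentation A (weightFiltration w π m) := by
  let N := restrictSupport A {s : σ →₀ ℕ | Finsupp.weight w s ≤ m}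
  have : Module.Finite A N := finite_restrictSupport_weight_le hw m
  have : Module.Free A N := .of_basis (basisRestrictSupport A _)
  let toFiltration : N →ₗ[A] weightFiltration w π m := π.toLinearMap.submoduleMap N
  refine Module.finitePresentation_of_free_of_surjective toFiltration
    (π.toLinearMap.submoduleMap_surjective N) ?_
  refine Submodule.fg_of_fg_map_injective N.subtype N.injective_subtype ?_
  have hmap : toFiltration.ker.map N.subtype = (RingHom.ker π).restrictScalars A ⊓ N := by
    ext f
    constructor
    · rintro ⟨g, hg, rfl⟩
      exact ⟨congrArg Subtype.val hg, g.2⟩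
    · rintro ⟨hf, hfN⟩
      exact ⟨⟨f, hfN⟩, Subtype.ext hf, rfl⟩
  rw [hmap, ker_inf_restrictSupport_eq_map_weightTruncation hker]
  exact fg_map_weightTruncation m hw hfg

end GradedQuotient

section BaseChange

lemma finrank_baseChange_of_retraction {A K M : Type*} [CommRing A] [CommRing K] [Algebra A K]
    [AddCommGroup M] [Module A M] {N : Submodule A M} {r : M →ₗ[A] N}
    (hr : r ∘ₗ N.subtype = .id) : finrank K (N.baseChange K) = finrank K (K ⊗[A] N) := by
  have hleft : Function.LeftInverse (r.baseChange K) (N.subtype.baseChange K) := fun x ↦ by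
    rw [← LinearMap.comp_apply, ← LinearMap.baseChange_comp, hr, LinearMap.baseChange_id,
      LinearMap.id_apply]
  exact (LinearEquiv.ofInjective _ hleft.injective).finrank_eq.symm

variable {σ A R : Type*} [CommRing A] [CommRing R] [Algebra A R] {w : σ → ℕ}
  (π : MvPolynomial σ A →ₐ[A] R) (K : Type*) [CommRing K] [Algebra A K]

/-- The presentation `K[x_i] → K ⊗ R` obtained from a presentation `A[x_i] → R` by base change along
`A → K`. -/
noncomputable def baseChangePresentation : MvPolynomial σ K →ₐ[K] K ⊗[A] R :=
  (Algebra.TensorProduct.map (.id K K) π).comp (algebraTensorAlgEquiv A K).symm.toAlgHom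

lemma baseChangePresentation_surjective (hπ : Function.Surjective π) :
    Function.Surjective (baseChangePresentation π K) :=
  (Algebra.TensorProduct.map_surjective _ _ Function.surjective_id hπ).comp
    (algebraTensorAlgEquiv A K).symm.surjective

lemma weightFiltration_baseChangePresentation (m : ℕ) :
    weightFiltration w (baseChangePresentation π K) m = (weightFiltration w π m).baseChange K := by
  rw [weightFiltration_eq_span, weightFiltration_eq_span, Submodule.baseChange_span,
    Set.image_image]
  simp [baseChangePresentation]

variable {π}

lemma finrank_weightFiltration_residueFieldAt [Finite σ] (hw : ∀ i, w i ≠ 0)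
    (hπ : Function.Surjective π)
    (hker : ∀ f ∈ RingHom.ker π, ∀ k, weightedHomogeneousComponent w k f ∈ RingHom.ker π)
    [Module.Flat A R] (m : ℕ) (p : PrimeSpectrum A) :
    finrank (residueFieldAt p)
        (weightFiltration w (baseChangePresentation π (residueFieldAt p)) m) =
      rankAtStalk (weightFiltration w π m) p := by
  obtain ⟨r, hr⟩ := exists_retraction_weightFiltration hker hπ m
  have := finite_weightFiltration π hw m
  have : Module.Flat A (weightFiltration w π m) := .of_retract _ r hr
  rw [weightFiltration_baseChangePresentation, finrank_baseChange_of_retraction hr,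
    rankAtStalk_eq]

lemma finrank_weightFiltration_residueFieldAt_eq [Finite σ] [PreconnectedSpace (PrimeSpectrum A)]
    (hw : ∀ i, w i ≠ 0) (hπ : Function.Surjective π)
    (hker : ∀ f ∈ RingHom.ker π, ∀ k, weightedHomogeneousComponent w k f ∈ RingHom.ker π)
    (hfg : (RingHom.ker π).FG) [Module.Flat A R] (m : ℕ) (p q : PrimeSpectrum A) :
    finrank (residueFieldAt p)
        (weightFiltration w (baseChangePresentation π (residueFieldAt p)) m) =
      finrank (residueFieldAt q)
        (weightFiltration w (baseChangePresentation π (residueFieldAt q)) m) := by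
  obtain ⟨r, hr⟩ := exists_retraction_weightFiltration hker hπ m
  have : Module.Flat A (weightFiltration w π m) := .of_retract _ r hr
  have := finitePresentation_weightFiltration hw hker hfg m
  rw [finrank_weightFiltration_residueFieldAt hw hπ hker,
    finrank_weightFiltration_residueFieldAt hw hπ hker]
  exact isLocallyConstant_rankAtStalk.apply_eq_of_preconnectedSpace p q

end BaseChange

theorem fibers_same_dimension_general
    {σ A : Type*} [Finite σ] [CommRing A] [PreconnectedSpace (PrimeSpectrum A)]
    {w : σ → ℕ} (hw : ∀ i, w i ≠ 0) {I : Ideal (MvPolynomial σ A)} (hfg : I.FG)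
    (hI : ∀ f ∈ I, ∀ k, weightedHomogeneousComponent w k f ∈ I)
    [Module.Flat A (MvPolynomial σ A ⧸ I)] (p q : PrimeSpectrum A) :
    ringKrullDim ((MvPolynomial σ A ⧸ I) ⊗[A] residueFieldAt p) =
      ringKrullDim ((MvPolynomial σ A ⧸ I) ⊗[A] residueFieldAt q) := by
  have hswap (x : PrimeSpectrum A) :
      ringKrullDim ((MvPolynomial σ A ⧸ I) ⊗[A] residueFieldAt x) =
        ringKrullDim (residueFieldAt x ⊗[A] (MvPolynomial σ A ⧸ I)) :=
    ringKrullDim_eq_of_ringEquiv (Algebra.TensorProduct.comm A (MvPolynomial σ A ⧸ I)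
      (residueFieldAt x)).toRingEquiv
  have hsurj : Function.Surjective (Ideal.Quotient.mkₐ A I) := Ideal.Quotient.mkₐ_surjective A I
  rw [← Ideal.Quotient.mkₐ_ker A I] at hfg hI
  rw [hswap p, hswap q]
  exact ringKrullDim_eq_of_finrank_weightFiltration_eq hw
    (baseChangePresentation_surjective _ _ hsurj) (baseChangePresentation_surjective _ _ hsurj)
    fun m ↦ finrank_weightFiltration_residueFieldAt_eq hw hsurj hI hfg m p q

/-- Let `A` be a commutative Noetherian ring with connected spectrum, `S = A[x₁,…,x_n]` graded
with `deg xᵢ = δᵢ > 0`, `I ⊆ S` a homogeneous ideal, and `R = S ⧸ I`. If `R` is flat as an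
`A`-module, then all fibers `R ⊗_A κ(p)`, for `p ∈ Spec A`, have the same Krull dimension. -/
theorem fibers_same_dimension
    {n : ℕ} {A : Type*} [CommRing A] [IsNoetherianRing A]
    [ConnectedSpace (PrimeSpectrum A)]
    (δ : Fin n → ℕ) (hδ : ∀ i, 0 < δ i)
    (I : Ideal (MvPolynomial (Fin n) A))
    (hI : ∀ f ∈ I, ∀ e : ℕ, MvPolynomial.weightedHomogeneousComponent δ e f ∈ I)
    (hflat : Module.Flat A (MvPolynomial (Fin n) A ⧸ I)) :
    ∀ p q : PrimeSpectrum A,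
      ringKrullDim ((MvPolynomial (Fin n) A ⧸ I) ⊗[A] residueFieldAt p) =
        ringKrullDim ((MvPolynomial (Fin n) A ⧸ I) ⊗[A] residueFieldAt q) :=
  fibers_same_dimension_general (fun i ↦ (hδ i).ne') (IsNoetherian.noetherian I) hI
end
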